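/- arXiv:2402.14153 — 4 statements merged into one kernel-verified Lean document; each statement's English description precedes it below -/
import Mathlib

section
/- Let n = 3 and G = SL_3(ℤ). Then the image of ∂[e_1, e_2, e_3, e_1−e_2, e_1−e_3, e_2−e_3] in the coinvariant space Sh_2 ⊗_G ℚ is zero; that is, each of the six basic 2-sharbly classes obtained by deleting one entry of the 6-tuple (e_1, e_2, e_3, e_1−e_2, e_1−e_3, e_2−e_3), with its alternating sign, sums to zero in Sh_2 ⊗_G ℚ. (This is the statement that z = [e_1,e_2,e_3,e_1−e_2,e_1−e_3,e_2−e_3]_G is a sharbly cycle for SL_3(ℤ).) -/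
/-!
Sharbly spaces and coinvariants, following Ash–Gunnells–McConnell.

For fixed `n ≥ 1` and `k ≥ 0`, the sharbly space `Sh_k` is the ℚ-vector space
generated by symbols `[v_1, …, v_{n+k}]` (each `v_i` a nonzero vector in ℚ^n)
modulo the relations (i) antisymmetry under permutations, (ii) vanishing when
the `v_i` do not span ℚ^n, (iii) invariance under scaling an entry by a nonzero
rational.  We realize this as a quotient of the free ℚ-module on *all* tuples,
additionally killing the tuples having a zero entry (so that the quotient is
generated exactly by the tuples of nonzero vectors).  The coinvariant space
`Sh_k ⊗_G ℚ` for `G = SL_n(ℤ)` is obtained by further quotienting by the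
relations `g • x − x`; quotienting by all the relations at once yields the same
space.
-/

open Matrix

namespace Sharbly

abbrev Vec (n : ℕ) := Fin n → ℚ

abbrev Tup (n k : ℕ) := Fin (n + k) → Vec n

/-- The generator of the free ℚ-module corresponding to the symbol `[v_1,…,v_{n+k}]`. -/
noncomputable def gen (n k : ℕ) (v : Tup n k) : Tup n k →₀ ℚ := Finsupp.single v 1

/-- The action of `g ∈ SL_n(ℤ)` on a tuple of vectors in ℚ^n. -/
def actTup (n k : ℕ) (g : Matrix.SpecialLinearGroup (Fin n) ℤ) (v : Tup n k) : Tup n k :=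
  fun i => ((g : Matrix (Fin n) (Fin n) ℤ).map (Int.cast : ℤ → ℚ)).mulVec (v i)

/-- The subspace of relations: (i) antisymmetry, (ii) non-spanning tuples,
(iii) scaling an entry by a nonzero rational, (iv) tuples with a zero entry
(so that the quotient is the sharbly space, generated by tuples of nonzero
vectors), and (v) the coinvariant relations `g•x − x` for `g ∈ SL_n(ℤ)`. -/
noncomputable def coinvRel (n k : ℕ) : Submodule ℚ (Tup n k →₀ ℚ) :=
  Submodule.span ℚ
    ( {x | ∃ (v : Tup n k) (σ : Equiv.Perm (Fin (n + k))),
          x = gen n k (v ∘ σ) - ((Equiv.Perm.sign σ : ℤ) : ℚ) • gen n k v}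
    ∪ {x | ∃ v : Tup n k, Submodule.span ℚ (Set.range v) ≠ ⊤ ∧ x = gen n k v}
    ∪ {x | ∃ (v : Tup n k) (i : Fin (n + k)) (a : ℚ), a ≠ 0 ∧
          x = gen n k v - gen n k (Function.update v i (a • v i))}
    ∪ {x | ∃ (v : Tup n k) (i : Fin (n + k)), v i = 0 ∧ x = gen n k v}
    ∪ {x | ∃ (v : Tup n k) (g : Matrix.SpecialLinearGroup (Fin n) ℤ),
          x = gen n k (actTup n k g v) - gen n k v} )

/-- The coinvariant space `Sh_k ⊗_G ℚ` for `G = SL_n(ℤ)`. -/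
abbrev ShCoinv (n k : ℕ) := (Tup n k →₀ ℚ) ⧸ coinvRel n k

/-- The class `[v_1,…,v_{n+k}]_G` in the coinvariant space. -/
noncomputable def cls (n k : ℕ) (v : Tup n k) : ShCoinv n k :=
  Submodule.Quotient.mk (gen n k v)

/-- The standard basis vector `e_i` of ℚ^n. -/
noncomputable def e (n : ℕ) (i : Fin n) : Vec n := Pi.single i 1

end Sharbly

open Sharbly

/- A `k`-sharbly class dies as soon as some `g ∈ SL_n(ℤ)` permutes its vectors oddly up to scalars.
When `n` is odd, minus a reflection lies in `SL_n(ℤ)`; taking the reflection that fixes a hyperplane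
pointwise and interchanges two lines off it, every tuple with all but two vectors on an integral
hyperplane, the two others being integral at height `±1`, has class zero.  Each face of the `A₃`
tile is of this form for a coordinate hyperplane: the roots of `A₃` are the edges of the complete
graph `K₄`, deleting an edge leaves a vertex of degree two at one of its ends, and only the two
edges at that vertex lie off the corresponding hyperplane. -/

namespace Sharbly

variable {n k : ℕ}

theorem cls_comp_perm (v : Tup n k) (σ : Equiv.Perm (Fin (n + k))) :
    cls n k (v ∘ σ) = ((Equiv.Perm.sign σ : ℤ) : ℚ) • cls n k v :=
  (Submodule.Quotient.eq _).2 <| Submodule.subset_span <|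
    .inl <| .inl <| .inl <| .inl ⟨v, σ, rfl⟩

theorem cls_update_smul (v : Tup n k) (i : Fin (n + k)) {a : ℚ} (ha : a ≠ 0) :
    cls n k (Function.update v i (a • v i)) = cls n k v :=
  ((Submodule.Quotient.eq _).2 <| Submodule.subset_span <|
    .inl <| .inl <| .inr ⟨v, i, a, ha, rfl⟩).symm

theorem cls_actTup (g : SpecialLinearGroup (Fin n) ℤ) (v : Tup n k) :
    cls n k (actTup n k g v) = cls n k v :=
  (Submodule.Quotient.eq _).2 <| Submodule.subset_span <| .inr ⟨v, g, rfl⟩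

theorem cls_smul (v : Tup n k) {s : Fin (n + k) → ℚ} (hs : ∀ i, s i ≠ 0) :
    cls n k (fun i => s i • v i) = cls n k v := by
  suffices h : ∀ t : Finset (Fin (n + k)),
      cls n k (t.piecewise (fun i => s i • v i) v) = cls n k v by
    simpa only [Finset.piecewise_univ] using h Finset.univ
  intro t
  induction t using Finset.induction_on with
  | empty => rw [Finset.piecewise_empty]
  | insert i t hi ih =>
    have hv : t.piecewise (fun i => s i • v i) v i = v i := Finset.piecewise_eq_of_notMem _ _ _ hi
    rw [Finset.piecewise_insert, ← hv, cls_update_smul _ i (hs i), ih]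

theorem cls_eq_zero_of_odd_symmetry (v : Tup n k) (g : SpecialLinearGroup (Fin n) ℤ)
    {σ : Equiv.Perm (Fin (n + k))} (hσ : Equiv.Perm.sign σ = -1)
    {s : Fin (n + k) → ℚ} (hs : ∀ i, s i ≠ 0)
    (h : ∀ i, actTup n k g v i = s i • v (σ i)) :
    cls n k v = 0 := by
  have h_neg : cls n k v = -cls n k v :=
    calc
      cls n k v = cls n k (actTup n k g v) := (cls_actTup g v).symm
      _ = cls n k (fun i => s i • (v ∘ σ) i) := congrArg _ (funext h)
      _ = cls n k (v ∘ σ) := cls_smul _ hs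
      _ = -cls n k v := by simp [cls_comp_perm, hσ]
  have := IsAddTorsionFree.of_module_rat (ShCoinv n k)
  exact self_eq_neg.mp h_neg

/-- The negative `x ↦ φ(x) r - x` of the reflection in the hyperplane `φ = 0` that sends `r` to
`-r`.  The sign gives it determinant one in odd dimension. -/
def negReflection (hn : Odd n) (φ r : Fin n → ℤ) (h : φ ⬝ᵥ r = 2) :
    SpecialLinearGroup (Fin n) ℤ :=
  ⟨vecMulVec r φ - 1, by
    rw [← neg_sub, det_neg, sub_eq_add_neg, ← neg_vecMulVec, vecMulVec_eq Unit,
      det_one_add_replicateCol_mul_replicateRow, dotProduct_neg, h, Fintype.card_fin,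
      hn.neg_one_pow]
    norm_num⟩

theorem actTup_negReflection (hn : Odd n) {φ r : Fin n → ℤ} (h : φ ⬝ᵥ r = 2) (v : Tup n k)
    (i : Fin (n + k)) :
    actTup n k (negReflection hn φ r h) v i =
      (((↑) ∘ φ : Vec n) ⬝ᵥ v i) • ((↑) ∘ r : Vec n) - v i := by
  have hmap : (vecMulVec r φ - 1).map (Int.cast : ℤ → ℚ) =
      vecMulVec ((↑) ∘ r) ((↑) ∘ φ) - 1 := by
    ext j l
    simp [vecMulVec_apply, one_apply, apply_ite (Int.cast : ℤ → ℚ)]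
  change (vecMulVec r φ - 1).map (Int.cast : ℤ → ℚ) *ᵥ v i = _
  rw [hmap, sub_mulVec, one_mulVec, vecMulVec_mulVec, op_smul_eq_smul]

theorem cls_eq_zero_of_negReflection_swaps (hn : Odd n) (v : Tup n k) {φ r : Fin n → ℤ}
    (hr : φ ⬝ᵥ r = 2) {a b : Fin (n + k)} (hab : a ≠ b) {c : ℚ} (hc : c ≠ 0)
    (ha : (((↑) ∘ φ : Vec n) ⬝ᵥ v a) • ((↑) ∘ r : Vec n) - v a = c • v b)
    (hb : (((↑) ∘ φ : Vec n) ⬝ᵥ v b) • ((↑) ∘ r : Vec n) - v b = c • v a)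
    (hv : ∀ i, i ≠ a → i ≠ b → ((↑) ∘ φ : Vec n) ⬝ᵥ v i = 0) :
    cls n k v = 0 := by
  refine cls_eq_zero_of_odd_symmetry v (negReflection hn φ r hr) (Equiv.Perm.sign_swap hab)
    (s := fun i => if i = a ∨ i = b then c else -1)
    (fun i => by split_ifs; exacts [hc, by norm_num]) fun i => ?_
  rw [actTup_negReflection]
  rcases eq_or_ne i a with rfl | hia
  · rw [Equiv.swap_apply_left, if_pos (.inl rfl), ha]
  rcases eq_or_ne i b with rfl | hib
  · rw [Equiv.swap_apply_right, if_pos (.inr rfl), hb]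
  · rw [hv i hia hib, Equiv.swap_apply_of_ne_of_ne hia hib, if_neg (not_or.mpr ⟨hia, hib⟩),
      zero_smul, zero_sub, neg_one_smul]

theorem intCast_comp_dotProduct (x y : Fin n → ℤ) :
    ((↑) ∘ x : Vec n) ⬝ᵥ ((↑) ∘ y) = ((x ⬝ᵥ y : ℤ) : ℚ) :=
  ((Int.castRingHom ℚ).map_dotProduct x y).symm

theorem cls_eq_zero_of_forall_ne_dotProduct_eq_zero (hn : Odd n) (v : Tup n k)
    {φ p q : Fin n → ℤ} {a b : Fin (n + k)} (hab : a ≠ b)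
    (ha : v a = (↑) ∘ p) (hb : v b = (↑) ∘ q)
    (hp : IsUnit (φ ⬝ᵥ p)) (hq : IsUnit (φ ⬝ᵥ q))
    (hv : ∀ i, i ≠ a → i ≠ b → ((↑) ∘ φ : Vec n) ⬝ᵥ v i = 0) :
    cls n k v = 0 := by
  set α := φ ⬝ᵥ p
  set β := φ ⬝ᵥ q
  have hα : α * α = 1 := Int.isUnit_mul_self hp
  have hβ : β * β = 1 := Int.isUnit_mul_self hq
  have hα_cast : (α * α : ℚ) = 1 := mod_cast hα
  have hβ_cast : (β * β : ℚ) = 1 := mod_cast hβ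
  have hαβ : (α * β : ℚ) ≠ 0 := mod_cast (hp.mul hq).ne_zero
  -- Minus the reflection along `αp + βq` sends `p` to `αβ q` and `q` to `αβ p`.
  have hr : φ ⬝ᵥ (α • p + β • q) = 2 := by
    rw [dotProduct_add, dotProduct_smul, dotProduct_smul, smul_eq_mul, smul_eq_mul, hα, hβ,
      one_add_one_eq_two]
  have hr_cast : ((↑) ∘ (α • p + β • q) : Vec n) = (α : ℚ) • v a + (β : ℚ) • v b := by
    rw [ha, hb]
    ext j
    simp
  have hφa : ((↑) ∘ φ : Vec n) ⬝ᵥ v a = α := by rw [ha, intCast_comp_dotProduct]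
  have hφb : ((↑) ∘ φ : Vec n) ⬝ᵥ v b = β := by rw [hb, intCast_comp_dotProduct]
  refine cls_eq_zero_of_negReflection_swaps hn v hr hab hαβ ?_ ?_ hv
  · rw [hφa, hr_cast, smul_add, smul_smul, smul_smul, hα_cast, one_smul, add_sub_cancel_left]
  · rw [hφb, hr_cast, smul_add, smul_smul, smul_smul, hβ_cast, one_smul, add_sub_cancel_right,
      mul_comm]

/-- The entries `e₁, e₂, e₃, e₁ - e₂, e₁ - e₃, e₂ - e₃` of the `A₃` tile: the positive roots of `A₃`
with `e₄` set to zero.  Integer entries make incidences with the coordinate hyperplanes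
decidable by evaluation. -/
def A3Root : Fin 6 → Fin 3 → ℤ :=
  ![![1, 0, 0], ![0, 1, 0], ![0, 0, 1], ![1, -1, 0], ![1, 0, -1], ![0, 1, -1]]

theorem exists_coordinate_A3Root_face (m : Fin 6) :
    ∃ (j : Fin 3) (a b : Fin 5), a ≠ b ∧
      IsUnit (A3Root (m.succAbove a) j) ∧ IsUnit (A3Root (m.succAbove b) j) ∧
      ∀ i, i ≠ a → i ≠ b → A3Root (m.succAbove i) j = 0 := by
  simp only [Int.isUnit_iff]
  revert m
  decide

theorem cls_eq_zero_of_eq_A3Root_face (m : Fin 6) {v : Tup 3 2}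
    (hv : ∀ i, v i = (↑) ∘ A3Root (m.succAbove i)) : cls 3 2 v = 0 := by
  obtain ⟨j, a, b, hab, ha, hb, h⟩ := exists_coordinate_A3Root_face m
  refine cls_eq_zero_of_forall_ne_dotProduct_eq_zero (φ := Pi.single j 1) (by decide) v hab
    (hv a) (hv b) ?_ ?_ fun i hia hib => ?_
  · rwa [single_one_dotProduct]
  · rwa [single_one_dotProduct]
  · rw [hv, intCast_comp_dotProduct, single_one_dotProduct, h i hia hib, Int.cast_zero]

end Sharbly

/-- For `n = 3`, `G = SL_3(ℤ)`: the image of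
`∂[e₁, e₂, e₃, e₁−e₂, e₁−e₃, e₂−e₃]` in the coinvariant space `Sh_2 ⊗_G ℚ`
vanishes: the six basic 2-sharbly classes obtained by deleting one entry, taken
with alternating signs `(−1)^{i+1}`, sum to zero.  (That is,
`z = [e₁,e₂,e₃,e₁−e₂,e₁−e₃,e₂−e₃]_G` is a sharbly cycle for `SL_3(ℤ)`.) -/
theorem boundary_of_A3_tile_vanishes :
    cls 3 2 ![e 3 1, e 3 2, e 3 0 - e 3 1, e 3 0 - e 3 2, e 3 1 - e 3 2]
      - cls 3 2 ![e 3 0, e 3 2, e 3 0 - e 3 1, e 3 0 - e 3 2, e 3 1 - e 3 2]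
      + cls 3 2 ![e 3 0, e 3 1, e 3 0 - e 3 1, e 3 0 - e 3 2, e 3 1 - e 3 2]
      - cls 3 2 ![e 3 0, e 3 1, e 3 2, e 3 0 - e 3 2, e 3 1 - e 3 2]
      + cls 3 2 ![e 3 0, e 3 1, e 3 2, e 3 0 - e 3 1, e 3 1 - e 3 2]
      - cls 3 2 ![e 3 0, e 3 1, e 3 2, e 3 0 - e 3 1, e 3 0 - e 3 2] = 0 := by
  rw [cls_eq_zero_of_eq_A3Root_face 0, cls_eq_zero_of_eq_A3Root_face 1,
    cls_eq_zero_of_eq_A3Root_face 2, cls_eq_zero_of_eq_A3Root_face 3,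
    cls_eq_zero_of_eq_A3Root_face 4, cls_eq_zero_of_eq_A3Root_face 5]
  · simp only [sub_zero, add_zero]
  all_goals
    intro i
    ext j
    fin_cases i <;> fin_cases j <;> simp [e, A3Root, Fin.succAbove]
end

section
/- Let V be a type, let p ≥ 3 be an integer, let z_1, …, z_p be pairwise distinct elements of V, and let ε : {1,…,p} → {+1, −1} be a choice of signs. If Σ_{i=1}^{p} ε(i) · ∂(z_1, …, ẑ_i, …, z_p) = 0 in A_{p−2}, then either ε(i) = (−1)^i for all i, or ε(i) = (−1)^{i+1} for all i. -/
/-!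
The antisymmetrized chain groups `A_r` of a type `V`: the free ℤ-module on
symbols `(a_1,…,a_r)` with `a_i ∈ V`, modulo the relations
`(a_{σ(1)},…,a_{σ(r)}) = sign(σ)·(a_1,…,a_r)` for all permutations `σ`.
The boundary `∂(a_1,…,a_r) = Σ_{i=1}^{r} (−1)^i (a_1,…,â_i,…,a_r)`.
(We index tuples by `Fin r`, so the entry with index `j : Fin r` is the
`(j+1)`-st entry of the paper, and its sign in the boundary is `(−1)^{j+1}`.)
-/

namespace AltChains

/-- The free ℤ-module on `r`-tuples of elements of `V`. -/
abbrev AFree (V : Type*) (r : ℕ) := (Fin r → V) →₀ ℤ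

/-- The antisymmetry relations. -/
noncomputable def altRel (V : Type*) (r : ℕ) : Submodule ℤ (AFree V r) :=
  Submodule.span ℤ {x | ∃ (a : Fin r → V) (σ : Equiv.Perm (Fin r)),
    x = Finsupp.single (a ∘ σ) 1 - (Equiv.Perm.sign σ : ℤ) • Finsupp.single a 1}

/-- The antisymmetrized module `A_r`. -/
abbrev A (V : Type*) (r : ℕ) := AFree V r ⧸ altRel V r

/-- The class of the symbol `(a_1,…,a_r)` in `A_r`. -/
noncomputable def mkA (V : Type*) (r : ℕ) (a : Fin r → V) : A V r :=
  Submodule.Quotient.mk (Finsupp.single a 1)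

/-- The boundary `∂(a_1,…,a_{m+1}) = Σ_i (−1)^i (a_1,…,â_i,…,a_{m+1}) ∈ A_m`
of a basic symbol (with the paper's 1-indexed signs: the entry of index
`j : Fin (m+1)` is the `(j+1)`-st, with sign `(−1)^{j+1}`). -/
noncomputable def bdrySymb (V : Type*) (m : ℕ) (a : Fin (m + 1) → V) : A V m :=
  ∑ j : Fin (m + 1), ((-1 : ℤ) ^ (j.val + 1)) • mkA V m (j.removeNth a)

end AltChains

open AltChains

/-!
Let `b` be the face of `z` omitting two consecutive entries `z k` and `z (k + 1)`. For `z`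
injective, the boundary of the face of `z` omitting `z i` involves `b` only for `i = k` and
`i = k + 1`, and both coefficients equal `(-1) ^ (k + 1)`: once `z k` is omitted, `z (k + 1)` moves
into position `k`. A vanishing sum therefore forces `ε (k + 1) = -ε k`. Coefficients in the quotient
`A V r` are well defined as determinants of submatrices of the identity matrix indexed by `V`.
-/

section Tuples

variable {V : Type*} {n : ℕ}

theorem injective_removeNth {z : Fin (n + 1) → V} (hz : Function.Injective z) (i : Fin (n + 1)) :
    Function.Injective (i.removeNth z) :=
  hz.comp Fin.succAbove_right_injective

theorem notMem_range_removeNth_self {z : Fin (n + 1) → V} (hz : Function.Injective z)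
    (i : Fin (n + 1)) : z i ∉ Set.range (i.removeNth z) := by
  rintro ⟨j, hj⟩
  exact Fin.succAbove_ne i j (hz hj)

theorem mem_range_removeNth_of_ne (z : Fin (n + 1) → V) {i j : Fin (n + 1)} (hij : i ≠ j) :
    z i ∈ Set.range (j.removeNth z) := by
  obtain ⟨k, rfl⟩ := Fin.exists_succAbove_eq hij
  exact ⟨k, rfl⟩

theorem removeNth_removeNth_succ (z : Fin (n + 2) → V) (k : Fin (n + 1)) :
    k.removeNth (k.succ.removeNth z) = k.removeNth (k.castSucc.removeNth z) := by
  simpa using Fin.removeNth_removeNth_eq_swap z k k.succ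

theorem mem_range_removeNth_removeNth_castSucc (z : Fin (n + 2) → V) {k : Fin (n + 1)}
    {i : Fin (n + 2)} (hcast : i ≠ k.castSucc) (hsucc : i ≠ k.succ) :
    z i ∈ Set.range (k.removeNth (k.castSucc.removeNth z)) := by
  obtain ⟨j, rfl⟩ := Fin.exists_succAbove_eq hcast
  have hjk : j ≠ k := by
    rintro rfl
    exact hsucc (Fin.succAbove_castSucc_self j)
  exact mem_range_removeNth_of_ne (k.castSucc.removeNth z) hjk

end Tuples

theorem eq_neg_one_pow_mul_of_succ_eq_neg {R : Type*} [Ring R] {n : ℕ} {f : Fin (n + 1) → R}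
    (hf : ∀ k : Fin n, f k.succ = -f k.castSucc) (i : Fin (n + 1)) :
    f i = (-1) ^ i.val * f 0 := by
  induction i using Fin.induction with
  | zero => simp
  | succ k ih => rw [hf, ih, Fin.val_succ, Fin.val_castSucc, pow_succ', neg_one_mul, neg_mul]

namespace AltChains

variable {V : Type*} {r : ℕ}

section Lift

variable {M : Type*} [AddCommGroup M]

/-- The universal property of `A V r`: an antisymmetric function of `r`-tuples extends to a
homomorphism on the antisymmetrized module. -/
noncomputable def lift (f : (Fin r → V) → M)
    (hf : ∀ (a : Fin r → V) (σ : Equiv.Perm (Fin r)),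
      f (a ∘ σ) = (Equiv.Perm.sign σ : ℤ) • f a) : A V r →ₗ[ℤ] M :=
  (altRel V r).liftQ (Finsupp.linearCombination ℤ f) <| by
    rw [altRel, Submodule.span_le]
    rintro _ ⟨a, σ, rfl⟩
    simp [hf]

theorem lift_mkA (f : (Fin r → V) → M)
    (hf : ∀ (a : Fin r → V) (σ : Equiv.Perm (Fin r)),
      f (a ∘ σ) = (Equiv.Perm.sign σ : ℤ) • f a) (a : Fin r → V) :
    lift f hf (mkA V r a) = f a :=
  (Submodule.liftQ_apply _ _ _).trans (by simp)

end Lift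

open Classical in
/-- The coefficient of the symbol `b` in an element of `A V r`. On a symbol `a` it is the
determinant of the matrix with entries `1` where `a i = b j` and `0` elsewhere, that is, the sum of
`sign σ` over the permutations `σ` with `a ∘ σ = b`; this makes antisymmetry in `a` automatic. -/
noncomputable def coeff (b : Fin r → V) : A V r →ₗ[ℤ] ℤ :=
  lift (fun a ↦ ((1 : Matrix V V ℤ).submatrix a b).det) fun a σ ↦ by
    rw [smul_eq_mul]
    exact Matrix.det_permute σ ((1 : Matrix V V ℤ).submatrix a b)

open Classical in
theorem coeff_mkA (b a : Fin r → V) :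
    coeff b (mkA V r a) = ((1 : Matrix V V ℤ).submatrix a b).det :=
  lift_mkA _ _ a

theorem coeff_mkA_self {b : Fin r → V} (hb : Function.Injective b) :
    coeff b (mkA V r b) = 1 := by
  classical
  rw [coeff_mkA, Matrix.submatrix_one b hb, Matrix.det_one]

theorem coeff_mkA_eq_zero {a b : Fin r → V} {v : V} (hb : v ∈ Set.range b)
    (ha : v ∉ Set.range a) : coeff b (mkA V r a) = 0 := by
  classical
  obtain ⟨m, rfl⟩ := hb
  rw [coeff_mkA]
  exact Matrix.det_eq_zero_of_column_eq_zero m fun i ↦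
    Matrix.one_apply_ne fun h ↦ ha ⟨i, h⟩

theorem coeff_bdrySymb (b : Fin r → V) (a : Fin (r + 1) → V) :
    coeff b (bdrySymb V r a) =
      ∑ j : Fin (r + 1), (-1) ^ (j.val + 1) * coeff b (mkA V r (j.removeNth a)) := by
  simp only [bdrySymb, map_sum, map_smul, smul_eq_mul]

theorem coeff_bdrySymb_removeNth {a : Fin (r + 1) → V} (ha : Function.Injective a)
    (j : Fin (r + 1)) : coeff (j.removeNth a) (bdrySymb V r a) = (-1) ^ (j.val + 1) := by
  rw [coeff_bdrySymb, Fintype.sum_eq_single j, coeff_mkA_self (injective_removeNth ha j), mul_one]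
  intro i hij
  rw [coeff_mkA_eq_zero (mem_range_removeNth_of_ne a hij) (notMem_range_removeNth_self ha i),
    mul_zero]

theorem coeff_bdrySymb_eq_zero {b : Fin r → V} {a : Fin (r + 1) → V} {v : V}
    (hb : v ∈ Set.range b) (ha : v ∉ Set.range a) : coeff b (bdrySymb V r a) = 0 := by
  rw [coeff_bdrySymb]
  refine Finset.sum_eq_zero fun j _ ↦ ?_
  have hj : v ∉ Set.range (j.removeNth a) := fun hv ↦
    ha (Set.range_comp_subset_range j.succAbove a hv)
  rw [coeff_mkA_eq_zero hb hj, mul_zero]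

theorem coeff_sum_smul_bdrySymb_removeNth {z : Fin (r + 2) → V} (hz : Function.Injective z)
    (ε : Fin (r + 2) → ℤ) (k : Fin (r + 1)) :
    coeff (k.removeNth (k.castSucc.removeNth z)) (∑ i, ε i • bdrySymb V r (i.removeNth z)) =
      (ε k.castSucc + ε k.succ) * (-1) ^ (k.val + 1) := by
  simp only [map_sum, map_smul, smul_eq_mul]
  rw [Fintype.sum_eq_add k.castSucc k.succ k.castSucc_lt_succ.ne]
  · rw [coeff_bdrySymb_removeNth (injective_removeNth hz _), ← removeNth_removeNth_succ,
      coeff_bdrySymb_removeNth (injective_removeNth hz _), add_mul]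
  · rintro i ⟨hcast, hsucc⟩
    rw [coeff_bdrySymb_eq_zero (mem_range_removeNth_removeNth_castSucc z hcast hsucc)
      (notMem_range_removeNth_self hz i), mul_zero]

end AltChains

theorem signs_of_vanishing_alternating_sum_general {V : Type*} {r : ℕ} {z : Fin (r + 2) → V}
    (hz : Function.Injective z) {ε : Fin (r + 2) → ℤ}
    (h : ∑ i, ε i • bdrySymb V r (i.removeNth z) = 0) (i : Fin (r + 2)) :
    ε i = (-1) ^ i.val * ε 0 := by
  refine eq_neg_one_pow_mul_of_succ_eq_neg (fun k ↦ ?_) i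
  have hcoeff : (ε k.castSucc + ε k.succ) * (-1) ^ (k.val + 1) = 0 := by
    rw [← coeff_sum_smul_bdrySymb_removeNth hz, h, map_zero]
  have hsum : ε k.castSucc + ε k.succ = 0 :=
    (mul_eq_zero.mp hcoeff).resolve_right (pow_ne_zero _ (by decide))
  exact eq_neg_of_add_eq_zero_right hsum

/-- Let `z_1, …, z_p` (`p ≥ 3`, here `p = n + 3`) be pairwise distinct elements
of `V` and `ε` a choice of signs `±1`.  If
`Σ_{i=1}^{p} ε(i) · ∂(z_1,…,ẑ_i,…,z_p) = 0` in `A_{p−2}`, then either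
`ε(i) = (−1)^i` for all `i` or `ε(i) = (−1)^{i+1}` for all `i` (in the
0-indexed formulation, `ε` at index `i : Fin p` equals `(−1)^{i+1}` for all
`i`, or `(−1)^i` for all `i`). -/
theorem signs_of_vanishing_alternating_sum (V : Type*) (n : ℕ)
    (z : Fin (n + 3) → V) (hz : Function.Injective z)
    (ε : Fin (n + 3) → ℤ) (hε : ∀ i, ε i = 1 ∨ ε i = -1)
    (h : ∑ i : Fin (n + 3), ε i • bdrySymb V (n + 1) (i.removeNth z) = 0) :
    (∀ i : Fin (n + 3), ε i = (-1 : ℤ) ^ (i.val + 1)) ∨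
      (∀ i : Fin (n + 3), ε i = (-1 : ℤ) ^ i.val) := by
  have hgen := signs_of_vanishing_alternating_sum_general hz h
  exact (hε 0).symm.imp (fun h0 i ↦ by rw [hgen, h0, pow_succ]) fun h0 i ↦ by rw [hgen, h0, mul_one]
end

section
/- Let E be a finite-dimensional real affine (or vector) space, let ι be a finite index set with N elements, and let q : ι → E be a family of N points. If the affine span of the points q_i (i ∈ ι) has dimension exactly N − 2, then q has exactly one circuit: there is a unique subset s ⊆ ι such that the subfamily (q_i)_{i∈s} is affinely dependent while every proper subfamily of it is affinely independent. -/
/-- A nonempty subset `s ⊆ ι` is a *circuit* of a family of points `q : ι → E`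
if the subfamily `(q_i)_{i ∈ s}` is affinely dependent while every proper
subfamily of it is affinely independent. -/
def IsCircuit {E ι : Type*} [AddCommGroup E] [Module ℝ E] (q : ι → E) (s : Set ι) : Prop :=
  s.Nonempty ∧ ¬ AffineIndependent ℝ (fun i : s => q i) ∧
    ∀ s' : Set ι, s' ⊂ s → AffineIndependent ℝ (fun i : s' => q i)

/-!
Homogenizing the points, `x ↦ (x - o, 1)`, turns affine dependence into linear dependence and
raises the dimension of the span by one, so the space of relations among the homogenized points is
a line. A subfamily is dependent iff its coordinate subspace meets this line nontrivially, that is,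
iff it contains the line. Hence the dependent index sets are exactly those containing every index
that occurs in some relation, and there is a smallest one.
-/

open Module Submodule Set

section Linear

theorem existsUnique_minimal_le_supported {R ι : Type*} [Semiring R]
    (K : Submodule R (ι →₀ R)) :
    ∃! s : Set ι, Minimal (fun s ↦ K ≤ Finsupp.supported R R s) s := by
  have le_supported_iff (s : Set ι) :
      K ≤ Finsupp.supported R R s ↔ (⋃ w ∈ K, (w.support : Set ι)) ≤ s :=
    iUnion₂_subset_iff.symm
  simp only [le_supported_iff, minimal_ge_iff, existsUnique_eq]

theorem existsUnique_minimal_not_linearIndepOn {R V ι : Type*} [Ring R] [AddCommGroup V]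
    [Module R V] {v : ι → V} (hv : IsAtom (LinearMap.ker (Finsupp.linearCombination R v))) :
    ∃! s : Set ι, Minimal (fun s ↦ ¬ LinearIndepOn R v s) s := by
  have dependent_iff (s : Set ι) : ¬ LinearIndepOn R v s ↔
      LinearMap.ker (Finsupp.linearCombination R v) ≤ Finsupp.supported R R s := by
    rw [linearIndepOn_iff_disjoint, disjoint_comm, ← hv.not_le_iff_disjoint, not_not]
  simpa only [dependent_iff] using existsUnique_minimal_le_supported _

theorem finrank_submodule_prod {k V W : Type*} [DivisionRing k] [AddCommGroup V] [Module k V]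
    [AddCommGroup W] [Module k W] (S : Submodule k V) (T : Submodule k W) [FiniteDimensional k S]
    [FiniteDimensional k T] : finrank k (S.prod T) = finrank k S + finrank k T := by
  have range_eq : LinearMap.range (S.subtype.prodMap T.subtype) = S.prod T := by
    simp only [LinearMap.range_prodMap, range_subtype]
  rw [← range_eq, LinearMap.finrank_range_of_inj (S.injective_subtype.prodMap T.injective_subtype),
    finrank_prod]

theorem finrank_span_range_add_finrank_ker_linearCombination {k V ι : Type*} [DivisionRing k]
    [AddCommGroup V] [Module k V] [Fintype ι] (v : ι → V) :
    finrank k (span k (range v)) + finrank k (LinearMap.ker (Finsupp.linearCombination k v)) =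
      Fintype.card ι := by
  rw [← Finsupp.range_linearCombination, LinearMap.finrank_range_add_finrank_ker,
    finrank_finsupp_self]

end Linear

section Homogenization

/-- The homogenization of a point `x` of an affine space with respect to an origin `o`, placing the
affine space as the hyperplane at height `1` in `V × k`. -/
def homogenize (k : Type*) {V P : Type*} [One k] [AddGroup V] [AddTorsor V P] (o x : P) : V × k :=
  (x -ᵥ o, 1)

variable {k V P ι : Type*} [AddCommGroup V] [AddTorsor V P]

theorem affineIndependent_iff_linearIndependent_homogenize [Ring k] [Module k V] (o : P)
    (p : ι → P) :
    AffineIndependent k p ↔ LinearIndependent k (fun i ↦ homogenize k o (p i)) := by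
  have sum_smul_homogenize (t : Finset ι) (w : ι → k) :
      ∑ i ∈ t, w i • homogenize k o (p i) =
        (t.weightedVSubOfPoint p o w, ∑ i ∈ t, w i) := by
    simp [homogenize, Prod.ext_iff, Prod.fst_sum, Prod.snd_sum, Finset.weightedVSubOfPoint_apply]
  simp only [linearIndependent_iff', sum_smul_homogenize, Prod.mk_eq_zero]
  refine forall₂_congr fun t w ↦ ⟨fun h hw ↦ h hw.2 ?_, fun h hsum hw ↦ h ⟨?_, hsum⟩⟩
  · rw [t.weightedVSub_eq_weightedVSubOfPoint_of_sum_eq_zero w p hw.2 o, hw.1]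
  · rw [← t.weightedVSub_eq_weightedVSubOfPoint_of_sum_eq_zero w p hsum o, hw]

theorem span_image_homogenize [Ring k] [Module k V] {s : Set P} {o : P} (ho : o ∈ s) :
    span k (homogenize k o '' s) = (vectorSpan k s).prod ⊤ := by
  have homogenize_mem {x : P} (hx : x ∈ s) :
      homogenize k o x ∈ span k (homogenize k o '' s) :=
    subset_span (mem_image_of_mem _ hx)
  have origin_mem : ((0 : V), (1 : k)) ∈ span k (homogenize k o '' s) := by
    simpa [homogenize] using homogenize_mem ho
  refine le_antisymm (span_le.2 ?_) ((prod_le_iff ..).2 ⟨?_, ?_⟩)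
  · rintro _ ⟨x, hx, rfl⟩
    exact ⟨vsub_mem_vectorSpan k hx ho, mem_top⟩
  · rw [vectorSpan_eq_span_vsub_set_right k ho, map_span_le]
    rintro _ ⟨x, hx, rfl⟩
    simpa [homogenize] using sub_mem (homogenize_mem hx) origin_mem
  · rintro _ ⟨c, -, rfl⟩
    simpa using smul_mem _ c origin_mem

theorem finrank_span_image_homogenize [DivisionRing k] [Module k V] {s : Set P} {o : P}
    [FiniteDimensional k (vectorSpan k s)] (ho : o ∈ s) :
    finrank k (span k (homogenize k o '' s)) = finrank k (vectorSpan k s) + 1 := by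
  rw [span_image_homogenize ho, finrank_submodule_prod, finrank_top, finrank_self]

end Homogenization

theorem isCircuit_iff_minimal {E ι : Type*} [AddCommGroup E] [Module ℝ E] {q : ι → E}
    {s : Set ι} :
    IsCircuit q s ↔ Minimal (fun s : Set ι ↦ ¬ AffineIndependent ℝ (fun i : s ↦ q i)) s := by
  have nonempty_of_dependent (hs : ¬ AffineIndependent ℝ (fun i : s ↦ q i)) : s.Nonempty := by
    contrapose! hs
    subst hs
    exact affineIndependent_of_subsingleton ℝ _
  simp only [IsCircuit, minimal_iff_forall_ssubset, not_not]
  exact ⟨And.right, fun hs ↦ ⟨nonempty_of_dependent hs.1, hs⟩⟩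

theorem existsUnique_circuit_of_finrank_affineSpan_general {k V P ι : Type*} [DivisionRing k]
    [AddCommGroup V] [Module k V] [AddTorsor V P] [Fintype ι] (p : ι → P)
    (h : finrank k (affineSpan k (range p)).direction + 2 = Fintype.card ι) :
    ∃! s : Set ι, Minimal (fun s : Set ι ↦ ¬ AffineIndependent k (fun i : s ↦ p i)) s := by
  obtain ⟨i₀⟩ : Nonempty ι := Fintype.card_pos_iff.1 (by lia)
  let v : ι → V × k := homogenize k (p i₀) ∘ p
  have finrank_span : finrank k (span k (range v)) = finrank k (vectorSpan k (range p)) + 1 := by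
    rw [range_comp, finrank_span_image_homogenize (mem_range_self i₀)]
  have isAtom_relations : IsAtom (LinearMap.ker (Finsupp.linearCombination k v)) := by
    have rank_nullity := finrank_span_range_add_finrank_ker_linearCombination (k := k) v
    rw [direction_affineSpan] at h
    exact isAtom_iff_finrank_eq_one.2 (by lia)
  have affineIndependent_iff_linearIndepOn (s : Set ι) :
      AffineIndependent k (fun i : s ↦ p i) ↔ LinearIndepOn k v s :=
    affineIndependent_iff_linearIndependent_homogenize (p i₀) _
  simpa only [affineIndependent_iff_linearIndepOn]
    using existsUnique_minimal_not_linearIndepOn isAtom_relations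

/-- Let `q : ι → E` be a family of `N` points in a finite-dimensional real
vector space whose affine span has dimension exactly `N − 2`.  Then `q` has
exactly one circuit. -/
theorem existsUnique_circuit_of_finrank_affineSpan
    {E ι : Type*} [AddCommGroup E] [Module ℝ E] [FiniteDimensional ℝ E]
    [Fintype ι] (q : ι → E)
    (h : Module.finrank ℝ (affineSpan ℝ (Set.range q)).direction + 2 = Fintype.card ι) :
    ∃! s : Set ι, IsCircuit q s := by
  simpa only [isCircuit_iff_minimal] using existsUnique_circuit_of_finrank_affineSpan_general q h
end

section
/- Let C*_n denote the set of real symmetric positive semidefinite n×n matrices A such that the kernel of A is the real span of its rational points, i.e., ker A = W ⊗ ℝ for some ℚ-subspace W of ℚ^n (the case W = 0 giving the positive definite matrices). Then C*_n is a convex cone: it is closed under multiplication by positive scalars and under convex combinations. In particular, for A, B ∈ C*_n and t ∈ [0,1], the matrix tA + (1−t)B again lies in C*_n. -/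
/-!
The kernel of a sum of positive semidefinite matrices is the intersection of their kernels, so
everything comes down to `(V ⊓ W) ⊗ ℝ = (V ⊗ ℝ) ⊓ (W ⊗ ℝ)` for subspaces `V, W` of `ℚ^n`. This
holds because a real vector `x` lies in `W ⊗ ℝ` if and only if `f ∘ x ∈ W` for every `ℚ`-linear
functional `f : ℝ → ℚ`, a condition that visibly commutes with intersections.
-/

open Matrix

/-- The minimal Satake bordification `C*_n`: the set of real symmetric positive
semidefinite `n×n` matrices `A` whose kernel is the real span of a ℚ-subspace
`W` of ℚ^n, i.e. `ker A = W ⊗ ℝ` (the case `W = 0` giving the positive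
definite matrices). -/
def SatakeCone (n : ℕ) : Set (Matrix (Fin n) (Fin n) ℝ) :=
  {A | A.PosSemidef ∧ ∃ W : Submodule ℚ (Fin n → ℚ),
      (LinearMap.ker A.mulVecLin : Set (Fin n → ℝ)) =
        ↑(Submodule.span ℝ ((fun w : Fin n → ℚ => fun i => ((w i : ℝ))) '' (W : Set (Fin n → ℚ))))}

section ExtendScalars

variable {K : Type*} (L : Type*) {ι : Type*} [CommSemiring K] [Semiring L] [Algebra K L]

/-- The scalar extension `W ⊗ L` of a submodule `W` of `K^ι`, realised inside `L^ι` as the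
`L`-span of the image of `W`. -/
def extendScalars (W : Submodule K (ι → K)) : Submodule L (ι → L) :=
  Submodule.span L ((Algebra.linearMap K L).compLeft ι '' W)

/-- A submodule of `L^ι` is defined over `K` if it is spanned by its `K`-points, that is, if it is
`W ⊗ L` for some submodule `W` of `K^ι`. -/
def IsDefinedOver (K : Type*) {L ι : Type*} [CommSemiring K] [Semiring L] [Algebra K L]
    (U : Submodule L (ι → L)) : Prop :=
  ∃ W : Submodule K (ι → K), U = extendScalars L W

variable {L}

theorem isDefinedOver_top [Finite ι] : IsDefinedOver K (⊤ : Submodule L (ι → L)) := by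
  classical
  have range_basisFun_subset :
      Set.range (Pi.basisFun L ι) ⊆
        (Algebra.linearMap K L).compLeft ι '' (⊤ : Submodule K (ι → K)) := by
    rintro _ ⟨i, rfl⟩
    refine ⟨Pi.single i 1, Submodule.mem_top, funext fun j => ?_⟩
    simp [Pi.single_apply, apply_ite (algebraMap K L)]
  refine ⟨⊤, (top_le_iff.1 ?_).symm⟩
  exact (Pi.basisFun L ι).span_eq.ge.trans (Submodule.span_mono range_basisFun_subset)

theorem compLeft_mem_of_mem_extendScalars {W : Submodule K (ι → K)} {x : ι → L}
    (hx : x ∈ extendScalars L W) (f : L →ₗ[K] K) : f.compLeft ι x ∈ W := by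
  induction hx using Submodule.span_induction generalizing f with
  | mem x hx =>
    obtain ⟨w, hw, rfl⟩ := hx
    have compLeft_algebraMap :
        f.compLeft ι ((Algebra.linearMap K L).compLeft ι w) = f 1 • w := by
      ext i
      simp [Algebra.algebraMap_eq_smul_one, mul_comm]
    exact compLeft_algebraMap ▸ W.smul_mem (f 1) hw
  | zero => exact (map_zero (f.compLeft ι)).symm ▸ W.zero_mem
  | add x y _ _ hx hy => exact (map_add (f.compLeft ι) x y).symm ▸ W.add_mem (hx f) (hy f)
  | smul r _ _ hx => exact hx (f ∘ₗ LinearMap.mulLeft K r)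

theorem exists_eq_sum_basis_smul_coord [Finite ι] {κ : Type*} (b : Module.Basis κ K L)
    (x : ι → L) :
    ∃ s : Finset κ,
      x = ∑ j ∈ s, b j • (Algebra.linearMap K L).compLeft ι ((b.coord j).compLeft ι x) := by
  classical
  cases nonempty_fintype ι
  let s := Finset.univ.biUnion fun i => (b.repr (x i)).support
  refine ⟨s, funext fun i => ?_⟩
  have support_subset : (b.repr (x i)).support ⊆ s :=
    Finset.subset_biUnion_of_mem (fun i => (b.repr (x i)).support) (Finset.mem_univ i)
  calc x i = (b.repr (x i)).sum fun j a => a • b j := (b.linearCombination_repr (x i)).symm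
    _ = ∑ j ∈ s, b.coord j (x i) • b j :=
        Finsupp.sum_of_support_subset _ support_subset _ fun j _ => zero_smul K (b j)
    _ = (∑ j ∈ s, b j • (Algebra.linearMap K L).compLeft ι ((b.coord j).compLeft ι x)) i := by
        simp [Algebra.smul_def, Algebra.commutes]

variable [Module.Free K L] [Finite ι]

theorem mem_extendScalars_iff {W : Submodule K (ι → K)} {x : ι → L} :
    x ∈ extendScalars L W ↔ ∀ f : L →ₗ[K] K, f.compLeft ι x ∈ W := by
  refine ⟨compLeft_mem_of_mem_extendScalars, fun h => ?_⟩
  let b := Module.Free.chooseBasis K L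
  obtain ⟨s, hs⟩ := exists_eq_sum_basis_smul_coord b x
  rw [hs]
  exact Submodule.sum_mem _ fun j _ =>
    Submodule.smul_mem _ _ (Submodule.subset_span ⟨_, h (b.coord j), rfl⟩)

theorem extendScalars_inf (V W : Submodule K (ι → K)) :
    extendScalars L (V ⊓ W) = extendScalars L V ⊓ extendScalars L W := by
  ext x
  simp only [Submodule.mem_inf, mem_extendScalars_iff, forall_and]

theorem IsDefinedOver.inf {U₁ U₂ : Submodule L (ι → L)} (h₁ : IsDefinedOver K U₁)
    (h₂ : IsDefinedOver K U₂) : IsDefinedOver K (U₁ ⊓ U₂) := by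
  obtain ⟨V, rfl⟩ := h₁
  obtain ⟨W, rfl⟩ := h₂
  exact ⟨V ⊓ W, (extendScalars_inf V W).symm⟩

end ExtendScalars

open scoped ComplexOrder in
theorem ker_mulVecLin_add_of_posSemidef {m 𝕜 : Type*} [Fintype m] [RCLike 𝕜] {A B : Matrix m m 𝕜}
    (hA : A.PosSemidef) (hB : B.PosSemidef) :
    LinearMap.ker (A + B).mulVecLin = LinearMap.ker A.mulVecLin ⊓ LinearMap.ker B.mulVecLin := by
  ext x
  simp only [Submodule.mem_inf, LinearMap.mem_ker, mulVecLin_apply]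
  rw [← (hA.add hB).dotProduct_mulVec_zero_iff, ← hA.dotProduct_mulVec_zero_iff,
    ← hB.dotProduct_mulVec_zero_iff, add_mulVec, dotProduct_add]
  exact add_eq_zero_iff_of_nonneg (hA.dotProduct_mulVec_nonneg x) (hB.dotProduct_mulVec_nonneg x)

namespace SatakeCone

variable {n : ℕ} {A B : Matrix (Fin n) (Fin n) ℝ}

theorem mem_iff :
    A ∈ SatakeCone n ↔ A.PosSemidef ∧ IsDefinedOver ℚ (LinearMap.ker A.mulVecLin) :=
  and_congr_right fun _ => exists_congr fun _ => SetLike.coe_set_eq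

theorem zero_mem : (0 : Matrix (Fin n) (Fin n) ℝ) ∈ SatakeCone n := by
  rw [mem_iff, mulVecLin_zero, LinearMap.ker_zero]
  exact ⟨PosSemidef.zero, isDefinedOver_top⟩

theorem add_mem (hA : A ∈ SatakeCone n) (hB : B ∈ SatakeCone n) : A + B ∈ SatakeCone n := by
  rw [mem_iff] at hA hB ⊢
  rw [ker_mulVecLin_add_of_posSemidef hA.1 hB.1]
  exact ⟨hA.1.add hB.1, hA.2.inf hB.2⟩

theorem smul_mem {c : ℝ} (hc : 0 ≤ c) (hA : A ∈ SatakeCone n) : c • A ∈ SatakeCone n := by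
  rcases hc.eq_or_lt with rfl | c_pos
  · simpa only [zero_smul] using zero_mem
  · have mulVecLin_smul : (c • A).mulVecLin = c • A.mulVecLin := LinearMap.ext (smul_mulVec c A)
    rw [mem_iff] at hA ⊢
    rw [mulVecLin_smul, LinearMap.ker_smul _ _ c_pos.ne']
    exact ⟨hA.1.smul hc, hA.2⟩

end SatakeCone

/-- `C*_n` is a convex cone: it is closed under multiplication by positive
scalars and under convex combinations `tA + (1−t)B`, `t ∈ [0,1]`. -/
theorem satakeCone_smul_mem_and_convex (n : ℕ) :
    (∀ A ∈ SatakeCone n, ∀ c : ℝ, 0 < c → c • A ∈ SatakeCone n) ∧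
    (∀ A ∈ SatakeCone n, ∀ B ∈ SatakeCone n, ∀ t : ℝ, 0 ≤ t → t ≤ 1 →
        t • A + (1 - t) • B ∈ SatakeCone n) :=
  ⟨fun _ hA _ hc => SatakeCone.smul_mem hc.le hA, fun _ hA _ hB _ ht₀ ht₁ =>
    SatakeCone.add_mem (SatakeCone.smul_mem ht₀ hA)
      (SatakeCone.smul_mem (sub_nonneg.2 ht₁) hB)⟩
end
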